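/- arXiv:1209.0585 — 2 statements merged into one kernel-verified Lean document; each statement's English description precedes it below -/
import Mathlib

section
/- The left real matrix representation Γ is multiplicative with respect to the complex-quaternion product: for all pairs X = (x, y) and A = (a, b) of real quaternions, Γ(X·A) = Γ(X)·Γ(A), where X·A = (xa − y*b, x*b + ya). -/
open Quaternion Matrix

noncomputable def lm (a : ℍ[ℝ]) : Matrix (Fin 4) (Fin 4) ℝ :=
  !![a.re, -a.imI, -a.imJ, -a.imK;
     a.imI, a.re, -a.imK, a.imJ;
     a.imJ, a.imK, a.re, -a.imI;
     a.imK, -a.imJ, a.imI, a.re]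

/-- The star operation a* = a₀ + a₁e₁ − a₂e₂ − a₃e₃. -/
noncomputable def st (a : ℍ[ℝ]) : ℍ[ℝ] := ⟨a.re, a.imI, -a.imJ, -a.imK⟩

/-- The left real matrix representation of the complex quaternion X = x + iy. -/
noncomputable def Gamma (x y : ℍ[ℝ]) : Matrix (Fin 4 ⊕ Fin 4) (Fin 4 ⊕ Fin 4) ℝ :=
  Matrix.fromBlocks (lm x) (-(lm (st y))) (lm y) (lm (st x))

section TwistedBlock

variable {n R S F G : Type*}

/-- The block matrix representing `x + iy`, where `i² = -1` and `s * i = i * σ s`, built from a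
representation `φ` of the coefficients. Taking `φ` and `σ` as plain functions makes
`Gamma x y` definitionally equal to `twistedBlock lm st x y`. -/
def twistedBlock [Neg R] (φ : S → Matrix n n R) (σ : S → S) (x y : S) :
    Matrix (n ⊕ n) (n ⊕ n) R :=
  fromBlocks (φ x) (-φ (σ y)) (φ y) (φ (σ x))

theorem Gamma_mul_general [Fintype n] [NonUnitalNonAssocRing R] [NonUnitalNonAssocRing S]
    [FunLike F S (Matrix n n R)] [NonUnitalRingHomClass F S (Matrix n n R)]
    [FunLike G S S] [NonUnitalRingHomClass G S S]
    (φ : F) {σ : G} (hσ : Function.Involutive σ) (x y a b : S) :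
    twistedBlock φ σ (x * a - σ y * b) (σ x * b + y * a) =
      twistedBlock φ σ x y * twistedBlock φ σ a b := by
  simp only [twistedBlock, fromBlocks_multiply, map_add, map_sub, map_mul, hσ _]
  congr 1
  · rw [Matrix.neg_mul, sub_eq_add_neg]
  · rw [Matrix.mul_neg, Matrix.neg_mul, neg_add]
  · rw [add_comm]
  · rw [Matrix.mul_neg, neg_add_eq_sub]

end TwistedBlock

/-- The basis `1, e₁, e₂, e₃` of `ℍ[ℝ]`, in which `lm a` is the matrix of left multiplication
by `a`. -/
noncomputable def oneIJKBasis : Module.Basis (Fin 4) ℝ ℍ[ℝ] :=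
  QuaternionAlgebra.basisOneIJK (-1) 0 (-1)

theorem coe_oneIJKBasis_repr (a : ℍ[ℝ]) :
    ⇑(oneIJKBasis.repr a) = ![a.re, a.imI, a.imJ, a.imK] :=
  rfl

theorem lm_mulVec_repr (a b : ℍ[ℝ]) :
    lm a *ᵥ oneIJKBasis.repr b = oneIJKBasis.repr (a * b) := by
  simp only [coe_oneIJKBasis_repr]
  ext i
  fin_cases i <;> simp [lm, vecHead, vecTail] <;> ring

theorem lm_eq_leftMulMatrix : lm = Algebra.leftMulMatrix oneIJKBasis := by
  funext a
  refine mulVec_injective (funext fun v => ?_)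
  obtain ⟨b, rfl⟩ := oneIJKBasis.equivFun.surjective v
  exact (lm_mulVec_repr a b).trans (Algebra.leftMulMatrix_mulVec_repr oneIJKBasis a b).symm

@[simp]
theorem st_re (a : ℍ[ℝ]) : (st a).re = a.re := rfl

@[simp]
theorem st_imI (a : ℍ[ℝ]) : (st a).imI = a.imI := rfl

@[simp]
theorem st_imJ (a : ℍ[ℝ]) : (st a).imJ = -a.imJ := rfl

@[simp]
theorem st_imK (a : ℍ[ℝ]) : (st a).imK = -a.imK := rfl

theorem st_involutive : Function.Involutive st := fun a => by
  ext <;> simp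

/-- The map `st` as a ring homomorphism; it is conjugation by `e₁`. -/
noncomputable def stHom : ℍ[ℝ] →+* ℍ[ℝ] where
  toFun := st
  map_one' := by ext <;> simp
  map_mul' a b := by ext <;> simp <;> ring
  map_zero' := by ext <;> simp
  map_add' a b := by ext <;> simp <;> ring

theorem Gamma_mul (x y a b : ℍ[ℝ]) :
    Gamma (x * a - st y * b) (st x * b + y * a) = Gamma x y * Gamma a b := by
  change twistedBlock lm stHom _ _ = twistedBlock lm stHom x y * twistedBlock lm stHom a b
  rw [lm_eq_leftMulMatrix]
  exact Gamma_mul_general _ st_involutive x y a b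
end

section
/- For every complex quaternion X = (x, y), the transpose of Γ(X) satisfies Γ(X)ᵗ = M₁·Θ(X)·M₂, where M₁ = diag(−A₁, A₁), M₂ = diag(−A₂, A₂) are 8×8 block-diagonal real matrices, A₁ is the 4×4 matrix with rows (0,−1,0,0), (−1,0,0,0), (0,0,0,1), (0,0,−1,0), and A₂ is the 4×4 matrix with rows (0,−1,0,0), (−1,0,0,0), (0,0,0,−1), (0,0,1,0). In particular, A₁·ρ(a)·A₂ = λ(a)ᵗ for every real quaternion a. -/
open Quaternion Matrix

noncomputable def rm (a : ℍ[ℝ]) : Matrix (Fin 4) (Fin 4) ℝ :=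
  !![a.re, -a.imI, -a.imJ, -a.imK;
     a.imI, a.re, a.imK, -a.imJ;
     a.imJ, -a.imK, a.re, a.imI;
     a.imK, a.imJ, -a.imI, a.re]

/-- The right real matrix representation of the complex quaternion X = x + iy. -/
noncomputable def Theta (x y : ℍ[ℝ]) : Matrix (Fin 4 ⊕ Fin 4) (Fin 4 ⊕ Fin 4) ℝ :=
  Matrix.fromBlocks (rm x) (-(rm y)) (rm (st y)) (rm (st x))

noncomputable def A1 : Matrix (Fin 4) (Fin 4) ℝ :=
  !![0, -1, 0, 0;
     -1, 0, 0, 0;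
     0, 0, 0, 1;
     0, 0, -1, 0]

noncomputable def A2 : Matrix (Fin 4) (Fin 4) ℝ :=
  !![0, -1, 0, 0;
     -1, 0, 0, 0;
     0, 0, 0, -1;
     0, 0, 1, 0]

noncomputable def M1 : Matrix (Fin 4 ⊕ Fin 4) (Fin 4 ⊕ Fin 4) ℝ :=
  Matrix.fromBlocks (-A1) 0 0 A1

noncomputable def M2 : Matrix (Fin 4 ⊕ Fin 4) (Fin 4 ⊕ Fin 4) ℝ :=
  Matrix.fromBlocks (-A2) 0 0 A2

/-!
In the coordinates `ℍ ≃ ℝ⁴`, `lm a` is `v ↦ a * v`, `rm a` is `v ↦ v * a`, `A1` is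
`v ↦ star (e₁ * v)` and `A2` is `v ↦ star (v * e₁)`, where `star` is quaternion conjugation (not
the operation `st`). Since conjugation reverses products and `e₁ * star e₁ = 1`, the matrix
`A1 * rm a * A2` is `v ↦ star a * v`, which is the transpose of `v ↦ a * v`. The signs in `M1` and
`M2` only negate the off-diagonal blocks.
-/

theorem fromBlocks_neg_diag_mul_fromBlocks_mul {l m n p q r s t R : Type*} [Fintype m] [Fintype n]
    [Fintype p] [Fintype q] [NonUnitalRing R]
    (P₁ : Matrix l m R) (P₂ : Matrix r n R) (A : Matrix m p R) (B : Matrix m q R)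
    (C : Matrix n p R) (D : Matrix n q R) (Q₁ : Matrix p s R) (Q₂ : Matrix q t R) :
    fromBlocks (-P₁) 0 0 P₂ * fromBlocks A B C D * fromBlocks (-Q₁) 0 0 Q₂ =
      fromBlocks (P₁ * A * Q₁) (-(P₁ * B * Q₂)) (-(P₂ * C * Q₁)) (P₂ * D * Q₂) := by
  simp [fromBlocks_multiply]

theorem star_mul_star_mul_mul {S : Type*} [Monoid S] [StarMul S] {u : S} (hu : u * star u = 1)
    (a v : S) : star (u * (star (v * u) * a)) = star a * v := by
  calc star (u * (star (v * u) * a))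
      = star a * v * (u * star u) := by simp only [star_mul, star_star, mul_assoc]
    _ = star a * v := by rw [hu, mul_one]

/-- The quaternion unit `e₁`, through which `A1` and `A2` are written as operations on `ℍ`. -/
@[simps]
def e₁ : ℍ[ℝ] := ⟨0, 1, 0, 0⟩

theorem e₁_mul_star_e₁ : e₁ * star e₁ = 1 := by
  ext <;> simp

theorem lm_mulVec_equivTuple (a v : ℍ[ℝ]) :
    lm a *ᵥ equivTuple ℝ v = equivTuple ℝ (a * v) := by
  ext i
  fin_cases i <;> simp [lm, mulVec, dotProduct, Fin.sum_univ_four] <;> ring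

theorem rm_mulVec_equivTuple (a v : ℍ[ℝ]) :
    rm a *ᵥ equivTuple ℝ v = equivTuple ℝ (v * a) := by
  ext i
  fin_cases i <;> simp [rm, mulVec, dotProduct, Fin.sum_univ_four] <;> ring

theorem A1_mulVec_equivTuple (v : ℍ[ℝ]) :
    A1 *ᵥ equivTuple ℝ v = equivTuple ℝ (star (e₁ * v)) := by
  ext i
  fin_cases i <;> simp [A1, mulVec, dotProduct, Fin.sum_univ_four]

theorem A2_mulVec_equivTuple (v : ℍ[ℝ]) :
    A2 *ᵥ equivTuple ℝ v = equivTuple ℝ (star (v * e₁)) := by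
  ext i
  fin_cases i <;> simp [A2, mulVec, dotProduct, Fin.sum_univ_four]

theorem lm_star (a : ℍ[ℝ]) : lm (star a) = (lm a)ᵀ := by
  ext i j
  fin_cases i <;> fin_cases j <;> simp [lm]

theorem A1_mul_rm_mul_A2 (a : ℍ[ℝ]) : A1 * rm a * A2 = (lm a)ᵀ := by
  rw [← lm_star]
  refine ext_of_mulVec_single fun i => ?_
  obtain ⟨v, hv⟩ := (equivTuple ℝ).surjective (Pi.single i 1)
  rw [← hv, ← mulVec_mulVec, ← mulVec_mulVec, A2_mulVec_equivTuple, rm_mulVec_equivTuple,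
    A1_mulVec_equivTuple, lm_mulVec_equivTuple, star_mul_star_mul_mul e₁_mul_star_e₁]

theorem Gamma_transpose (x y : ℍ[ℝ]) :
    (Gamma x y)ᵀ = M1 * Theta x y * M2 ∧
    ∀ a : ℍ[ℝ], A1 * rm a * A2 = (lm a)ᵀ := by
  refine ⟨?_, A1_mul_rm_mul_A2⟩
  calc (Gamma x y)ᵀ
      = fromBlocks (lm x)ᵀ (lm y)ᵀ (-(lm (st y))ᵀ) (lm (st x))ᵀ := by
        rw [Gamma, fromBlocks_transpose, transpose_neg]
    _ = fromBlocks (A1 * rm x * A2) (-(A1 * -rm y * A2))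
          (-(A1 * rm (st y) * A2)) (A1 * rm (st x) * A2) := by
        simp only [mul_neg, neg_mul, neg_neg, A1_mul_rm_mul_A2]
    _ = M1 * Theta x y * M2 := by
        rw [M1, Theta, M2, fromBlocks_neg_diag_mul_fromBlocks_mul]
end
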